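/- Let n be a natural number with n ≥ 3. Then (n - 1/2)(n - 1) ≤ liminf_{λ→(-1/2)⁺} 2√(2λ+1)·c_n(λ) and limsup_{λ→(-1/2)⁺} 2√(2λ+1)·c_n(λ) ≤ (n + 3/2)². -/

import Mathlib

open Polynomial Filter

/-- The weighted `L_2` norm with the Gegenbauer weight `w_lam(t) = (1-t^2)^(lam-1/2)`. -/
noncomputable def gegNorm (lam : ℝ) (f : ℝ → ℝ) : ℝ :=
  (∫ x in (-1:ℝ)..1, (f x) ^ 2 * (1 - x ^ 2) ^ (lam - 1/2)) ^ ((1:ℝ)/2)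

/-- The best Markov constant `c_n(lam)` in `‖p'‖ ≤ c_n(lam) ‖p‖` for polynomials of degree ≤ n. -/
noncomputable def markovConst (lam : ℝ) (n : ℕ) : ℝ :=
  sSup { r : ℝ | ∃ p : Polynomial ℝ, p ≠ 0 ∧ p.natDegree ≤ n ∧
    r = gegNorm lam (fun x => (Polynomial.derivative p).eval x) /
        gegNorm lam (fun x => p.eval x) }


theorem integral_eval_mul_eval_derivative (f g : ℝ[X]) (a b : ℝ) :
    ∫ x in a..b, f.eval x * (derivative g).eval x =
      f.eval b * g.eval b - f.eval a * g.eval a -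
        ∫ x in a..b, (derivative f).eval x * g.eval x :=
  intervalIntegral.integral_mul_deriv_eq_deriv_mul
    (fun x _ => f.hasDerivAt x) (fun x _ => g.hasDerivAt x)
    ((derivative f).continuous.intervalIntegrable _ _)
    ((derivative g).continuous.intervalIntegrable _ _)

theorem integral_eval_mul_eval_iterate_derivative {a b : ℝ} (g : ℝ[X]) (k : ℕ)
    (ha : ∀ j < k, (derivative^[j] g).eval a = 0) (hb : ∀ j < k, (derivative^[j] g).eval b = 0)
    (f : ℝ[X]) :
    ∫ x in a..b, f.eval x * (derivative^[k] g).eval x =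
      (-1) ^ k * ∫ x in a..b, (derivative^[k] f).eval x * g.eval x := by
  induction k generalizing f with
  | zero => simp
  | succ k ih =>
    rw [Function.iterate_succ_apply' derivative k g, integral_eval_mul_eval_derivative,
      ha k (by omega), hb k (by omega),
      ih (fun j hj => ha j (by omega)) (fun j hj => hb j (by omega)) (derivative f),
      Function.iterate_succ_apply]
    ring

/-- The Legendre polynomial of degree `n` shifted to `[0, 1]`, with real coefficients. -/
noncomputable def realShiftedLegendre (n : ℕ) : ℝ[X] :=
  (shiftedLegendre n).map (Int.castRingHom ℝ)

theorem natDegree_realShiftedLegendre_le (n : ℕ) : (realShiftedLegendre n).natDegree ≤ n :=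
  natDegree_map_le.trans (natDegree_shiftedLegendre n).le

theorem coeff_realShiftedLegendre (n k : ℕ) :
    (realShiftedLegendre n).coeff k = (-1) ^ k * n.choose k * (n + k).choose n := by
  simp [realShiftedLegendre, coeff_shiftedLegendre]

theorem realShiftedLegendre_eq_comp (n : ℕ) :
    realShiftedLegendre n = (-1) ^ n * (realShiftedLegendre n).comp (1 - X) := by
  have h := congrArg (Polynomial.map (Int.castRingHom ℝ))
    (neg_one_pow_mul_shiftedLegendre_comp_one_sub_X_eq n)
  simpa [realShiftedLegendre, Polynomial.map_comp] using h.symm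

theorem eval_zero_realShiftedLegendre (n : ℕ) : (realShiftedLegendre n).eval 0 = 1 := by
  simp [← coeff_zero_eq_eval_zero, coeff_realShiftedLegendre]

theorem eval_one_realShiftedLegendre (n : ℕ) : (realShiftedLegendre n).eval 1 = (-1) ^ n := by
  rw [realShiftedLegendre_eq_comp]
  simp [eval_zero_realShiftedLegendre]

theorem eval_zero_derivative_derivative_realShiftedLegendre (n : ℕ) :
    (derivative (derivative (realShiftedLegendre n))).eval 0 =
      ((n : ℝ) - 1) * n * (n + 1) * (n + 2) / 2 := by
  have h2 : ((n + 2).choose n : ℝ) = (n + 2) * (n + 1) / 2 := by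
    rw [Nat.choose_symm_add, Nat.cast_choose_two]
    push_cast; ring
  rw [← coeff_zero_eq_eval_zero]
  simp only [coeff_derivative, coeff_realShiftedLegendre]
  norm_num [h2, Nat.cast_choose_two]
  ring

theorem eval_one_derivative_derivative_realShiftedLegendre (n : ℕ) :
    (derivative (derivative (realShiftedLegendre n))).eval 1 =
      (-1) ^ n * (((n : ℝ) - 1) * n * (n + 1) * (n + 2) / 2) := by
  have h : derivative (derivative (realShiftedLegendre n)) =
      C ((-1) ^ n) * (derivative (derivative (realShiftedLegendre n))).comp (1 - X) := by
    conv_lhs => rw [realShiftedLegendre_eq_comp n,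
      show ((-1 : ℝ[X]) ^ n) = C ((-1) ^ n) by simp]
    generalize (-1 : ℝ) ^ n = c
    simp [derivative_comp]
  rw [h]
  simp [eval_zero_derivative_derivative_realShiftedLegendre]

theorem integral_mul_realShiftedLegendre_eq_zero {f : ℝ[X]} {n : ℕ} (hf : f.natDegree < n) :
    ∫ x in (0:ℝ)..1, f.eval x * (realShiftedLegendre n).eval x = 0 := by
  have hR : C (n.factorial : ℝ) * realShiftedLegendre n =
      derivative^[n] ((X : ℝ[X]) ^ n * (1 - X) ^ n) := by
    have h := congrArg (Polynomial.map (Int.castRingHom ℝ)) (factorial_mul_shiftedLegendre_eq n)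
    rw [← Polynomial.iterate_derivative_map] at h
    simpa [realShiftedLegendre] using h
  have h0 : ∀ j < n, (derivative^[j] ((X : ℝ[X]) ^ n * (1 - X) ^ n)).eval 0 = 0 := by
    intro j hj
    obtain ⟨r, hr⟩ := pow_sub_dvd_iterate_derivative_of_pow_dvd j
      (Dvd.intro _ rfl : (X : ℝ[X]) ^ n ∣ X ^ n * (1 - X) ^ n)
    rw [hr]
    simp [show n - j ≠ 0 by omega]
  have h1 : ∀ j < n, (derivative^[j] ((X : ℝ[X]) ^ n * (1 - X) ^ n)).eval 1 = 0 := by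
    intro j hj
    obtain ⟨r, hr⟩ := pow_sub_dvd_iterate_derivative_of_pow_dvd j
      (Dvd.intro_left _ rfl : (1 - X : ℝ[X]) ^ n ∣ X ^ n * (1 - X) ^ n)
    rw [hr]
    simp [show n - j ≠ 0 by omega]
  have h := integral_eval_mul_eval_iterate_derivative _ n h0 h1 f
  rw [← hR, iterate_derivative_eq_zero hf] at h
  simp only [eval_mul, eval_C, eval_zero, zero_mul, intervalIntegral.integral_zero,
    mul_zero, mul_left_comm _ (n.factorial : ℝ), intervalIntegral.integral_const_mul] at h
  exact (mul_eq_zero.mp h).resolve_left (by positivity)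

/-- The second derivative of the Legendre polynomial reproduces endpoint values with respect to the
weight `x (1 - x)`. -/
theorem integral_weight_mul_derivative_derivative_realShiftedLegendre {q : ℝ[X]} {n : ℕ}
    (hq : q.natDegree < n) :
    ∫ x in (0:ℝ)..1, x * (1 - x) * q.eval x *
      (derivative (derivative (realShiftedLegendre n))).eval x =
      q.eval 0 + (-1) ^ n * q.eval 1 := by
  have hdeg : (derivative (derivative (X * (1 - X) * q))).natDegree < n := by
    have h1 : (X * (1 - X) * q).natDegree ≤ q.natDegree + 2 := by
      have : (X * (1 - X) : ℝ[X]).natDegree ≤ 2 := by compute_degree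
      exact natDegree_mul_le.trans (by omega)
    have h2 := natDegree_derivative_le (X * (1 - X) * q)
    have h3 := natDegree_derivative_le (derivative (X * (1 - X) * q))
    omega
  have h := integral_eval_mul_eval_derivative (X * (1 - X) * q)
    (derivative (realShiftedLegendre n)) 0 1
  rw [integral_eval_mul_eval_derivative (derivative (X * (1 - X) * q)) (realShiftedLegendre n),
    integral_mul_realShiftedLegendre_eq_zero hdeg] at h
  simp only [eval_mul, eval_X, eval_sub, eval_one] at h
  rw [h, eval_zero_realShiftedLegendre, eval_one_realShiftedLegendre]
  simp
  ring

theorem endpoint_bound_unit_interval {q : ℝ[X]} {N : ℕ} (hN : 1 ≤ N) (hq : q.natDegree < N) :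
    2 * (q.eval 0 ^ 2 + q.eval 1 ^ 2) ≤
      ((N : ℝ) * (N + 1) * (N + 2) * (N + 3)) * ∫ x in (0:ℝ)..1, x * (1 - x) * q.eval x ^ 2 := by
  set T : ℝ := (N : ℝ) * (N + 1) * (N + 2) * (N + 3) with hT
  have hN' : (1 : ℝ) ≤ N := by exact_mod_cast hN
  have hTpos : 0 < T := by positivity
  set T' : ℝ := ((N : ℝ) - 1) * N * (N + 1) * (N + 2) with hT'
  have hTT : T' ≤ T := by
    have : 0 ≤ (N : ℝ) * (N + 1) * (N + 2) := by positivity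
    rw [hT, hT']; nlinarith
  have hdeg : ∀ m, (derivative (derivative (realShiftedLegendre m))).natDegree ≤ m - 2 := by
    intro m
    have h1 := natDegree_realShiftedLegendre_le m
    have h2 := natDegree_derivative_le (realShiftedLegendre m)
    have h3 := natDegree_derivative_le (derivative (realShiftedLegendre m))
    omega
  set A := derivative (derivative (realShiftedLegendre (N + 1))) with hA
  set B := derivative (derivative (realShiftedLegendre N)) with hB
  have hAdeg : A.natDegree ≤ N + 1 - 2 := hdeg (N + 1)
  have hBdeg : B.natDegree ≤ N - 2 := hdeg N
  have hA0 : A.eval 0 = T / 2 := by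
    rw [hA, eval_zero_derivative_derivative_realShiftedLegendre]; push_cast; ring
  have hA1 : A.eval 1 = (-1) ^ (N + 1) * (T / 2) := by
    rw [hA, eval_one_derivative_derivative_realShiftedLegendre]; push_cast; ring
  have hB0 : B.eval 0 = T' / 2 := eval_zero_derivative_derivative_realShiftedLegendre N
  have hB1 : B.eval 1 = (-1) ^ N * (T' / 2) := eval_one_derivative_derivative_realShiftedLegendre N
  have hsq : ((-1 : ℝ) ^ N) * (-1) ^ N = 1 := by rw [← mul_pow]; simp
  have iqA := integral_weight_mul_derivative_derivative_realShiftedLegendre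
    (q := q) (n := N + 1) (by omega)
  have iqB := integral_weight_mul_derivative_derivative_realShiftedLegendre hq
  have iAA := integral_weight_mul_derivative_derivative_realShiftedLegendre
    (q := A) (n := N + 1) (by omega)
  have iBA := integral_weight_mul_derivative_derivative_realShiftedLegendre
    (q := B) (n := N + 1) (by omega)
  have iBB := integral_weight_mul_derivative_derivative_realShiftedLegendre
    (q := B) (n := N) (by omega)
  rw [← hA] at iqA iAA iBA
  rw [← hB] at iqB iBB
  rw [hA0, hA1] at iAA
  rw [hB0, hB1] at iBA iBB
  set e : ℝ := (-1) ^ N with he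
  have he1 : (-1 : ℝ) ^ (N + 1) = -e := by rw [pow_succ]; ring
  rw [he1] at iqA iAA iBA
  set u := q.eval 0
  set v := q.eval 1
  set s := u + -e * v with hs
  set d := u + e * v with hd
  have hnonneg : 0 ≤ ∫ x in (0:ℝ)..1, x * (1 - x) *
      (q.eval x - T⁻¹ * (s * A.eval x + d * B.eval x)) ^ 2 := by
    refine intervalIntegral.integral_nonneg (by norm_num) fun x hx => ?_
    have := hx.1; have := sub_nonneg.2 hx.2
    positivity
  have hexp : ∫ x in (0:ℝ)..1, x * (1 - x) *
      (q.eval x - T⁻¹ * (s * A.eval x + d * B.eval x)) ^ 2 =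
      (∫ x in (0:ℝ)..1, x * (1 - x) * q.eval x ^ 2)
      - 2 * T⁻¹ * s * (∫ x in (0:ℝ)..1, x * (1 - x) * q.eval x * A.eval x)
      - 2 * T⁻¹ * d * (∫ x in (0:ℝ)..1, x * (1 - x) * q.eval x * B.eval x)
      + T⁻¹ ^ 2 * s ^ 2 * (∫ x in (0:ℝ)..1, x * (1 - x) * A.eval x * A.eval x)
      + 2 * T⁻¹ ^ 2 * s * d * (∫ x in (0:ℝ)..1, x * (1 - x) * B.eval x * A.eval x)
      + T⁻¹ ^ 2 * d ^ 2 * (∫ x in (0:ℝ)..1, x * (1 - x) * B.eval x * B.eval x) := by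
    simp only [← intervalIntegral.integral_const_mul]
    have hc : ∀ f : ℝ → ℝ, Continuous f → IntervalIntegrable f MeasureTheory.volume 0 1 :=
      fun f hf => hf.intervalIntegrable _ _
    rw [← intervalIntegral.integral_sub (hc _ (by fun_prop)) (hc _ (by fun_prop)),
      ← intervalIntegral.integral_sub (hc _ (by fun_prop)) (hc _ (by fun_prop)),
      ← intervalIntegral.integral_add (hc _ (by fun_prop)) (hc _ (by fun_prop)),
      ← intervalIntegral.integral_add (hc _ (by fun_prop)) (hc _ (by fun_prop)),
      ← intervalIntegral.integral_add (hc _ (by fun_prop)) (hc _ (by fun_prop))]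
    congr 1; ext x; ring
  rw [hexp, iqA, iqB, iAA, iBA, iBB] at hnonneg
  set J := ∫ x in (0:ℝ)..1, x * (1 - x) * q.eval x ^ 2
  have key : 0 ≤ T * (J - 2 * T⁻¹ * s * s - 2 * T⁻¹ * d * d + T⁻¹ ^ 2 * s ^ 2 * T +
      T⁻¹ ^ 2 * d ^ 2 * T') := by
    refine mul_nonneg hTpos.le (hnonneg.trans_eq ?_)
    linear_combination (T⁻¹ ^ 2 * s ^ 2 * T / 2 - T⁻¹ ^ 2 * s * d * T' +
      T⁻¹ ^ 2 * d ^ 2 * T' / 2) * hsq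
  have key2 : T * (J - 2 * T⁻¹ * s * s - 2 * T⁻¹ * d * d + T⁻¹ ^ 2 * s ^ 2 * T +
      T⁻¹ ^ 2 * d ^ 2 * T') = T * J - s ^ 2 - 2 * d ^ 2 + d ^ 2 * (T' / T) := by
    field_simp; ring
  have key3 : d ^ 2 * (T' / T) ≤ d ^ 2 := by
    refine mul_le_of_le_one_right (sq_nonneg d) ((div_le_one hTpos).2 hTT)
  have key4 : s ^ 2 + d ^ 2 = 2 * (u ^ 2 + v ^ 2) := by
    rw [hs, hd]; linear_combination (2 * v ^ 2) * hsq
  rw [key2] at key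
  linarith

theorem exists_endpoint_eq_unit_interval {N : ℕ} (hN : 1 ≤ N) :
    ∃ q : ℝ[X], q.natDegree < N ∧ 0 < ∫ x in (0:ℝ)..1, x * (1 - x) * q.eval x ^ 2 ∧
    2 * (q.eval 0 ^ 2 + q.eval 1 ^ 2) =
      ((N : ℝ) * (N + 1) * (N + 2) * (N + 3)) * ∫ x in (0:ℝ)..1, x * (1 - x) * q.eval x ^ 2 := by
  have hN' : (1 : ℝ) ≤ N := by exact_mod_cast hN
  have hdeg : (derivative (derivative (realShiftedLegendre (N + 1)))).natDegree < N := by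
    have h1 := natDegree_realShiftedLegendre_le (N + 1)
    have h2 := natDegree_derivative_le (realShiftedLegendre (N + 1))
    have h3 := natDegree_derivative_le (derivative (realShiftedLegendre (N + 1)))
    omega
  have h := integral_weight_mul_derivative_derivative_realShiftedLegendre
    (hdeg.trans (Nat.lt_succ_self N))
  rw [eval_zero_derivative_derivative_realShiftedLegendre,
    eval_one_derivative_derivative_realShiftedLegendre, ← mul_assoc, ← mul_pow] at h
  have hI : ∫ x in (0:ℝ)..1, x * (1 - x) *
      (derivative (derivative (realShiftedLegendre (N + 1)))).eval x ^ 2 =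
      (N : ℝ) * (N + 1) * (N + 2) * (N + 3) := by
    simp only [pow_two, ← mul_assoc]
    rw [h]; push_cast; norm_num; ring
  refine ⟨_, hdeg, ?_, ?_⟩
  · rw [hI]; positivity
  · rw [hI, eval_zero_derivative_derivative_realShiftedLegendre,
      eval_one_derivative_derivative_realShiftedLegendre, mul_pow, ← pow_mul, mul_comm _ 2,
      pow_mul]
    push_cast; norm_num; ring

theorem integral_unit_interval_comp (q : ℝ[X]) :
    ∫ x in (0:ℝ)..1, x * (1 - x) * (q.comp (C 2 * X - C 1)).eval x ^ 2 =
      (∫ x in (-1:ℝ)..1, (1 - x ^ 2) * q.eval x ^ 2) / 8 := by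
  have h := intervalIntegral.integral_comp_mul_sub (a := 0) (b := 1)
    (fun t : ℝ => (1 - t ^ 2) / 4 * q.eval t ^ 2) (two_ne_zero (α := ℝ)) 1
  rw [smul_eq_mul, show (2:ℝ) * 0 - 1 = -1 by norm_num, show (2:ℝ) * 1 - 1 = 1 by norm_num] at h
  calc _ = ∫ x in (0:ℝ)..1, (1 - (2 * x - 1) ^ 2) / 4 * q.eval (2 * x - 1) ^ 2 := by
        congr 1; ext x
        simp only [eval_comp, eval_sub, eval_mul, eval_C, eval_X]
        ring
    _ = _ := by
        rw [h, ← intervalIntegral.integral_const_mul, ← intervalIntegral.integral_div]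
        congr 1; ext x
        ring

theorem endpoint_bound {q : ℝ[X]} {N : ℕ} (hN : 1 ≤ N) (hq : q.natDegree < N) :
    16 * (q.eval 1 ^ 2 + q.eval (-1) ^ 2) ≤
      ((N : ℝ) * (N + 1) * (N + 2) * (N + 3)) * ∫ x in (-1:ℝ)..1, (1 - x ^ 2) * q.eval x ^ 2 := by
  have hdeg : (q.comp (C 2 * X - C 1)).natDegree < N := by
    refine lt_of_le_of_lt (natDegree_comp_le.trans ?_) hq
    exact mul_le_of_le_one_right (Nat.zero_le _) (by compute_degree)
  have h := endpoint_bound_unit_interval hN hdeg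
  rw [integral_unit_interval_comp] at h
  norm_num [eval_comp] at h
  linarith

theorem exists_endpoint_eq {N : ℕ} (hN : 1 ≤ N) :
    ∃ q : ℝ[X], q.natDegree < N ∧ 0 < ∫ x in (-1:ℝ)..1, (1 - x ^ 2) * q.eval x ^ 2 ∧
    16 * (q.eval 1 ^ 2 + q.eval (-1) ^ 2) =
      ((N : ℝ) * (N + 1) * (N + 2) * (N + 3)) * ∫ x in (-1:ℝ)..1, (1 - x ^ 2) * q.eval x ^ 2 := by
  obtain ⟨r, hdeg, hpos, hr⟩ := exists_endpoint_eq_unit_interval hN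
  have hcomp : (r.comp (C (1 / 2) * X + C (1 / 2))).comp (C 2 * X - C 1) = r := by
    have hX : (C (1 / 2) * X + C (1 / 2) : ℝ[X]).comp (C 2 * X - C 1) = X :=
      Polynomial.funext fun x => by simp; ring
    rw [comp_assoc, hX, comp_X]
  have hI := integral_unit_interval_comp (r.comp (C (1 / 2) * X + C (1 / 2)))
  rw [hcomp] at hI
  rw [hI] at hpos hr
  refine ⟨r.comp (C (1 / 2) * X + C (1 / 2)), ?_, by linarith, ?_⟩
  · refine lt_of_le_of_lt (natDegree_comp_le.trans ?_) hdeg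
    exact mul_le_of_le_one_right (Nat.zero_le _) (by compute_degree)
  · norm_num [eval_comp] at hr ⊢
    linarith

/-- The integral of a polynomial against the weight `(1 - x ^ 2) ^ (s - 1)` on `[-1, 1]`. -/
noncomputable def weightIntegral (s : ℝ) (f : ℝ[X]) : ℝ :=
  ∫ x in (-1:ℝ)..1, f.eval x * (1 - x ^ 2) ^ (s - 1)

theorem one_sub_sq_nonneg_of_mem_Icc {x : ℝ} (hx : x ∈ Set.Icc (-1:ℝ) 1) : 0 ≤ 1 - x ^ 2 := by
  nlinarith [hx.1, hx.2]

theorem one_sub_sq_pos_of_mem_Ioo {x : ℝ} (hx : x ∈ Set.Ioo (-1:ℝ) 1) : 0 < 1 - x ^ 2 := by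
  nlinarith [hx.1, hx.2]

theorem continuous_one_sub_sq_rpow {s : ℝ} (hs : 0 ≤ s) :
    Continuous fun x : ℝ => (1 - x ^ 2) ^ s :=
  Continuous.rpow_const (by fun_prop) fun _ => Or.inr hs

theorem intervalIntegrable_weight {s : ℝ} (hs : 0 < s) :
    IntervalIntegrable (fun x : ℝ => (1 - x ^ 2) ^ (s - 1)) MeasureTheory.volume (-1) 1 := by
  have hfac : ∀ x ∈ Set.Icc (-1:ℝ) 1,
      (1 - x) ^ (s - 1) * (1 + x) ^ (s - 1) = (1 - x ^ 2) ^ (s - 1) := by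
    intro x hx
    rw [← Real.mul_rpow (by linarith [hx.2]) (by linarith [hx.1])]
    congr 1; ring
  have hright : IntervalIntegrable (fun x : ℝ => (1 - x ^ 2) ^ (s - 1))
      MeasureTheory.volume 0 1 := by
    have h := ((intervalIntegral.intervalIntegrable_rpow' (a := 1) (b := 0)
      (by linarith : -1 < s - 1)).comp_sub_left 1).mul_continuousOn
      (g := fun x : ℝ => (1 + x) ^ (s - 1)) (by
        refine ContinuousOn.rpow_const (by fun_prop) fun x hx => Or.inl ?_
        simp only [sub_self, sub_zero, Set.uIcc_of_le (zero_le_one' ℝ)] at hx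
        linarith [hx.1])
    simp only [sub_self, sub_zero] at h
    refine h.congr fun x hx => ?_
    rw [Set.uIoc_of_le zero_le_one] at hx
    exact hfac x ⟨by linarith [hx.1], hx.2⟩
  have hleft : IntervalIntegrable (fun x : ℝ => (1 - x ^ 2) ^ (s - 1))
      MeasureTheory.volume (-1) 0 := by
    simpa using ((IntervalIntegrable.iff_comp_neg).1 hright).symm
  exact hleft.trans hright

theorem intervalIntegrable_mul_weight {s : ℝ} (hs : 0 < s) {f : ℝ → ℝ} (hf : Continuous f) :
    IntervalIntegrable (fun x : ℝ => f x * (1 - x ^ 2) ^ (s - 1)) MeasureTheory.volume (-1) 1 :=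
  (intervalIntegrable_weight hs).continuousOn_mul hf.continuousOn

theorem two_mul_weightIntegral {s : ℝ} (hs : 0 < s) (f : ℝ[X]) :
    2 * s * weightIntegral s f =
      (∫ x in (-1:ℝ)..1, (derivative (X * f)).eval x * (1 - x ^ 2) ^ s) +
        2 * s * ∫ x in (-1:ℝ)..1, f.eval x * (1 - x ^ 2) ^ s := by
  have hcs := continuous_one_sub_sq_rpow hs.le
  have hderiv : ∀ x ∈ Set.Ioo (-1:ℝ) 1,
      HasDerivAt (fun x : ℝ => (X * f).eval x * (1 - x ^ 2) ^ s)
        (((derivative (X * f)).eval x * (1 - x ^ 2) ^ s +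
          2 * s * (f.eval x * (1 - x ^ 2) ^ s)) -
          2 * s * (f.eval x * (1 - x ^ 2) ^ (s - 1))) x := by
    intro x hx
    have hpos := one_sub_sq_pos_of_mem_Ioo hx
    have hbase : HasDerivAt (fun x : ℝ => 1 - x ^ 2) (-(2 * x)) x := by
      simpa using (hasDerivAt_pow 2 x).const_sub 1
    refine (((X * f).hasDerivAt x).fun_mul
      (hbase.rpow_const (p := s) (Or.inl hpos.ne'))).congr_deriv ?_
    have hstep : (1 - x ^ 2) ^ s = (1 - x ^ 2) * (1 - x ^ 2) ^ (s - 1) := by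
      rw [Real.rpow_sub_one hpos.ne']; field_simp
    rw [eval_mul, eval_X, hstep]
    ring
  have h1 : IntervalIntegrable (fun x : ℝ => (derivative (X * f)).eval x * (1 - x ^ 2) ^ s)
      MeasureTheory.volume (-1) 1 :=
    ((derivative (X * f)).continuous.mul hcs).intervalIntegrable _ _
  have h2 : IntervalIntegrable (fun x : ℝ => 2 * s * (f.eval x * (1 - x ^ 2) ^ s))
      MeasureTheory.volume (-1) 1 :=
    (continuous_const.mul (f.continuous.mul hcs)).intervalIntegrable _ _
  have h3 : IntervalIntegrable (fun x : ℝ => 2 * s * (f.eval x * (1 - x ^ 2) ^ (s - 1)))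
      MeasureTheory.volume (-1) 1 := (intervalIntegrable_mul_weight hs f.continuous).const_mul _
  have h := intervalIntegral.integral_eq_sub_of_hasDerivAt_of_le (by norm_num)
    (((X * f).continuous.mul hcs).continuousOn) hderiv ((h1.add h2).sub h3)
  rw [intervalIntegral.integral_sub (h1.add h2) h3, intervalIntegral.integral_add h1 h2,
    intervalIntegral.integral_const_mul, intervalIntegral.integral_const_mul] at h
  norm_num [Real.zero_rpow hs.ne', -derivative_mul] at h
  rw [weightIntegral]
  linarith

open Topology in
theorem tendsto_integral_mul_one_sub_sq_rpow {g : ℝ → ℝ} (hg : Continuous g) :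
    Tendsto (fun s : ℝ => ∫ x in (-1:ℝ)..1, g x * (1 - x ^ 2) ^ s) (𝓝[>] 0)
      (𝓝 (∫ x in (-1:ℝ)..1, g x)) := by
  refine intervalIntegral.tendsto_integral_filter_of_dominated_convergence (fun x => |g x|)
    ?_ ?_ (hg.abs.intervalIntegrable _ _) ?_
  · filter_upwards [self_mem_nhdsWithin] with s hs
    exact (hg.mul (continuous_one_sub_sq_rpow (le_of_lt hs))).aestronglyMeasurable
  · filter_upwards [self_mem_nhdsWithin] with s hs
    refine Eventually.of_forall fun x hx => ?_
    rw [Set.uIoc_of_le (by norm_num)] at hx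
    have h0 := one_sub_sq_nonneg_of_mem_Icc ⟨hx.1.le, hx.2⟩
    rw [norm_mul, Real.norm_eq_abs, Real.norm_of_nonneg (Real.rpow_nonneg h0 s)]
    exact mul_le_of_le_one_right (abs_nonneg _)
      (Real.rpow_le_one h0 (by nlinarith [sq_nonneg x]) (le_of_lt hs))
  · filter_upwards [MeasureTheory.Measure.ae_ne MeasureTheory.volume (1:ℝ)] with x hx1 hx
    rw [Set.uIoc_of_le (by norm_num)] at hx
    have h0 := one_sub_sq_pos_of_mem_Ioo ⟨hx.1, lt_of_le_of_ne hx.2 hx1⟩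
    have h := ((Real.continuousAt_const_rpow h0.ne' (b := 0)).tendsto.mono_left
      (nhdsWithin_le_nhds (s := Set.Ioi 0))).const_mul (g x)
    simpa using h

open Topology in
/-- As `s → 0⁺`, the measures `s (1 - x ^ 2) ^ (s - 1) dx` concentrate at the endpoints. -/
theorem tendsto_mul_weightIntegral (f : ℝ[X]) :
    Tendsto (fun s : ℝ => s * weightIntegral s f) (𝓝[>] 0)
      (𝓝 ((f.eval 1 + f.eval (-1)) / 2)) := by
  have hid : Tendsto (fun s : ℝ => s) (𝓝[>] 0) (𝓝 0) := nhdsWithin_le_nhds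
  have h := (((tendsto_integral_mul_one_sub_sq_rpow (derivative (X * f)).continuous).add
    ((hid.const_mul 2).mul (tendsto_integral_mul_one_sub_sq_rpow f.continuous))).div_const 2)
  have hftc : ∫ x in (-1:ℝ)..1, (derivative (X * f)).eval x = f.eval 1 + f.eval (-1) := by
    rw [intervalIntegral.integral_eq_sub_of_hasDerivAt (fun x _ => (X * f).hasDerivAt x)
      ((derivative (X * f)).continuous.intervalIntegrable _ _)]
    simp
  rw [hftc] at h
  simp only [mul_zero, zero_mul, add_zero] at h
  refine h.congr' ?_
  filter_upwards [self_mem_nhdsWithin] with s hs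
  rw [← two_mul_weightIntegral hs]
  ring

open Topology in
theorem tendsto_weightIntegral_of_vanishing (q : ℝ[X]) :
    Tendsto (fun s : ℝ => weightIntegral s (((1 - X ^ 2) * q) ^ 2)) (𝓝[>] 0)
      (𝓝 (∫ x in (-1:ℝ)..1, (1 - x ^ 2) * q.eval x ^ 2)) := by
  refine (tendsto_integral_mul_one_sub_sq_rpow
    (g := fun x => (1 - x ^ 2) * q.eval x ^ 2) (by fun_prop)).congr fun s => ?_
  rw [weightIntegral]
  refine intervalIntegral.integral_congr fun x hx => ?_
  rw [Set.uIcc_of_le (by norm_num)] at hx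
  rcases (one_sub_sq_nonneg_of_mem_Icc hx).eq_or_lt with h0 | h0
  · simp [← h0]
  · have hstep : (1 - x ^ 2) ^ s = (1 - x ^ 2) * (1 - x ^ 2) ^ (s - 1) := by
      rw [Real.rpow_sub_one h0.ne']; field_simp
    simp only [eval_pow, eval_mul, eval_sub, eval_one, eval_X, hstep]
    ring

theorem weightIntegral_sq_antitone {s t : ℝ} (hs : 0 < s) (hst : s ≤ t) (p : ℝ[X]) :
    weightIntegral t (p ^ 2) ≤ weightIntegral s (p ^ 2) := by
  refine intervalIntegral.integral_mono_on_of_le_Ioo (by norm_num)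
    (intervalIntegrable_mul_weight (hs.trans_le hst) (p ^ 2).continuous)
    (intervalIntegrable_mul_weight hs (p ^ 2).continuous) fun x hx => ?_
  rw [eval_pow]
  exact mul_le_mul_of_nonneg_left (Real.rpow_le_rpow_of_exponent_ge (one_sub_sq_pos_of_mem_Ioo hx)
    (by nlinarith [sq_nonneg x]) (by linarith)) (sq_nonneg _)

theorem weightIntegral_C_mul (s c : ℝ) (f : ℝ[X]) :
    weightIntegral s (C c * f) = c * weightIntegral s f := by
  simp [weightIntegral, mul_assoc]

theorem weightIntegral_sum_sq {ι : Type*} [Fintype ι] {s : ℝ} (hs : 0 < s) (b : ι → ℝ[X])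
    (v : ι → ℝ) :
    weightIntegral s ((∑ i, C (v i) * b i) ^ 2) =
      ∑ i, ∑ j, v i * v j * weightIntegral s (b i * b j) := by
  have hint : ∀ i j, IntervalIntegrable
      (fun x : ℝ => v i * v j * ((b i * b j).eval x * (1 - x ^ 2) ^ (s - 1)))
      MeasureTheory.volume (-1) 1 := fun i j =>
    (intervalIntegrable_mul_weight hs (b i * b j).continuous).const_mul _
  simp only [weightIntegral, ← intervalIntegral.integral_const_mul]
  simp_rw [← intervalIntegral.integral_finsetSum fun j _ => hint _ j]
  rw [← intervalIntegral.integral_finsetSum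
    fun i _ => by
      simpa only [Finset.sum_fn] using IntervalIntegrable.sum Finset.univ fun j _ => hint i j]
  congr 1; ext x
  rw [eval_pow, eval_finsetSum, pow_two, Finset.sum_mul_sum, Finset.sum_mul]
  refine Finset.sum_congr rfl fun i _ => ?_
  rw [Finset.sum_mul]
  refine Finset.sum_congr rfl fun j _ => ?_
  simp only [eval_mul, eval_C]
  ring

open Topology in
theorem tendsto_mul_weightIntegral_sum_sq {ι : Type*} [Fintype ι] (b : ι → ℝ[X]) (v₀ : ι → ℝ) :
    Tendsto (fun z : (ι → ℝ) × ℝ => z.2 * weightIntegral z.2 ((∑ i, C (z.1 i) * b i) ^ 2))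
      (𝓝 v₀ ×ˢ 𝓝[>] 0)
      (𝓝 (((∑ i, C (v₀ i) * b i).eval 1 ^ 2 + (∑ i, C (v₀ i) * b i).eval (-1) ^ 2) / 2)) := by
  have hv : ∀ i, Tendsto (fun z : (ι → ℝ) × ℝ => z.1 i) (𝓝 v₀ ×ˢ 𝓝[>] 0) (𝓝 (v₀ i)) := fun i =>
    ((continuous_apply i).tendsto v₀).comp tendsto_fst
  have h : Tendsto (fun z : (ι → ℝ) × ℝ =>
      ∑ i, ∑ j, z.1 i * z.1 j * (z.2 * weightIntegral z.2 (b i * b j))) (𝓝 v₀ ×ˢ 𝓝[>] 0)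
      (𝓝 (∑ i, ∑ j, v₀ i * v₀ j * (((b i * b j).eval 1 + (b i * b j).eval (-1)) / 2))) :=
    tendsto_finsetSum _ fun i _ => tendsto_finsetSum _ fun j _ =>
      ((hv i).mul (hv j)).mul ((tendsto_mul_weightIntegral (b i * b j)).comp tendsto_snd)
  have hlim : ∑ i, ∑ j, v₀ i * v₀ j * (((b i * b j).eval 1 + (b i * b j).eval (-1)) / 2) =
      ((∑ i, C (v₀ i) * b i).eval 1 ^ 2 + (∑ i, C (v₀ i) * b i).eval (-1) ^ 2) / 2 := by
    simp only [eval_finsetSum, eval_mul, eval_C, pow_two, Finset.sum_mul_sum,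
      ← Finset.sum_add_distrib, Finset.sum_div]
    refine Finset.sum_congr rfl fun i _ => Finset.sum_congr rfl fun j _ => ?_
    ring
  rw [← hlim]
  refine h.congr' ?_
  have hpos : ∀ᶠ z : (ι → ℝ) × ℝ in 𝓝 v₀ ×ˢ 𝓝[>] 0, 0 < z.2 :=
    tendsto_snd.eventually (self_mem_nhdsWithin : Set.Ioi (0:ℝ) ∈ 𝓝[>] 0)
  filter_upwards [hpos] with z hz
  rw [weightIntegral_sum_sq hz, Finset.mul_sum]
  refine Finset.sum_congr rfl fun i _ => ?_
  rw [Finset.mul_sum]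
  refine Finset.sum_congr rfl fun j _ => ?_
  ring

theorem integral_one_sub_sq_mul_sq_pos {q : ℝ[X]} (hq : q ≠ 0) :
    0 < ∫ x in (-1:ℝ)..1, (1 - x ^ 2) * q.eval x ^ 2 := by
  refine intervalIntegral.integral_pos (by norm_num) (by fun_prop) (fun x hx => ?_) ?_
  · exact mul_nonneg (one_sub_sq_nonneg_of_mem_Icc ⟨hx.1.le, hx.2⟩) (sq_nonneg _)
  · obtain ⟨c, hc, hroot⟩ : ∃ c ∈ Set.Ioo (-1:ℝ) 1, ¬ q.IsRoot c := by
      by_contra! h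
      exact hq (eq_zero_of_infinite_isRoot q
        ((Set.Ioo_infinite (by norm_num : (-1:ℝ) < 1)).mono h))
    have h0 : q.eval c ≠ 0 := hroot
    exact ⟨c, Set.Ioo_subset_Icc_self hc,
      mul_pos (one_sub_sq_pos_of_mem_Ioo hc) (by positivity)⟩

theorem exists_eq_one_sub_sq_mul {p : ℝ[X]} (hp : p ≠ 0) (h1 : p.eval 1 = 0)
    (h2 : p.eval (-1) = 0) :
    ∃ q : ℝ[X], q ≠ 0 ∧ p = (1 - X ^ 2) * q ∧ p.natDegree = q.natDegree + 2 := by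
  obtain ⟨r, rfl⟩ := dvd_iff_isRoot.2 h1
  have h3 : r.eval (-1) = 0 := by
    simp only [eval_mul, eval_sub, eval_X, eval_C] at h2
    linarith
  obtain ⟨q, rfl⟩ := dvd_iff_isRoot.2 h3
  have hq : q ≠ 0 := by rintro rfl; simp at hp
  refine ⟨-q, neg_ne_zero.2 hq, ?_, ?_⟩
  · simp; ring
  · rw [natDegree_mul (X_sub_C_ne_zero 1) (mul_ne_zero (X_sub_C_ne_zero _) hq),
      natDegree_mul (X_sub_C_ne_zero _) hq, natDegree_X_sub_C, natDegree_X_sub_C, natDegree_neg]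
    omega

theorem derivative_eval_endpoints (q : ℝ[X]) :
    (derivative ((1 - X ^ 2) * q)).eval 1 ^ 2 + (derivative ((1 - X ^ 2) * q)).eval (-1) ^ 2 =
      4 * (q.eval 1 ^ 2 + q.eval (-1) ^ 2) := by
  simp
  ring

open Topology in
/-- Near a nonzero coefficient vector and for small `s`, the Markov ratio of the corresponding
polynomial is controlled by any constant exceeding the limiting one. -/
theorem eventually_markov_near {N : ℕ} (hN : 1 ≤ N) {K : ℝ}
    (hK : (N : ℝ) * (N + 1) * (N + 2) * (N + 3) < K) {v₀ : Fin (N + 2) → ℝ} (hv₀ : v₀ ≠ 0) :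
    ∀ᶠ z : (Fin (N + 2) → ℝ) × ℝ in 𝓝 v₀ ×ˢ 𝓝[>] 0,
      8 * (z.2 * weightIntegral z.2 ((∑ i, C (z.1 i) * derivative (X ^ (i : ℕ))) ^ 2)) ≤
        K * weightIntegral z.2 ((∑ i, C (z.1 i) * X ^ (i : ℕ)) ^ 2) := by
  have hK0 : 0 < K := lt_of_le_of_lt (by positivity) hK
  have hpos : ∀ᶠ z : (Fin (N + 2) → ℝ) × ℝ in 𝓝 v₀ ×ˢ 𝓝[>] 0, 0 < z.2 :=
    tendsto_snd.eventually (self_mem_nhdsWithin : Set.Ioi (0:ℝ) ∈ 𝓝[>] 0)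
  have hlim := tendsto_mul_weightIntegral_sum_sq (fun i : Fin (N + 2) => X ^ (i : ℕ)) v₀
  have hlim' := tendsto_mul_weightIntegral_sum_sq
    (fun i : Fin (N + 2) => derivative (X ^ (i : ℕ))) v₀
  set p : ℝ[X] := ∑ i, C (v₀ i) * X ^ (i : ℕ) with hp
  have hp' : ∑ i, C (v₀ i) * derivative (X ^ (i : ℕ)) = derivative p := by
    rw [hp, derivative_sum]
    exact Finset.sum_congr rfl fun i _ => (derivative_C_mul _ _).symm
  rw [hp'] at hlim'
  by_cases hend : p.eval 1 = 0 ∧ p.eval (-1) = 0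
  · have hp0 : p ≠ 0 := by
      intro h0
      refine hv₀ (funext fun i => ?_)
      have hc : p.coeff i = v₀ i := by
        simp [hp, finsetSum_coeff, coeff_X_pow, Fin.val_inj]
      rw [← hc, h0]
      simp
    have hdegp : p.natDegree ≤ N + 1 :=
      natDegree_sum_le_of_forall_le _ _ fun i _ =>
        (natDegree_C_mul_X_pow_le _ _).trans (by have := i.2; omega)
    obtain ⟨q, hq0, hpq, hdeg⟩ := exists_eq_one_sub_sq_mul hp0 hend.1 hend.2
    have hJ := integral_one_sub_sq_mul_sq_pos hq0
    have hbound := endpoint_bound hN (q := q) (by omega)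
    have htend := tendsto_weightIntegral_of_vanishing q
    rw [← hpq] at htend
    set J := ∫ x in (-1:ℝ)..1, (1 - x ^ 2) * q.eval x ^ 2
    have hE : 8 * (((derivative p).eval 1 ^ 2 + (derivative p).eval (-1) ^ 2) / 2) < K * J := by
      have := mul_lt_mul_of_pos_right hK hJ
      rw [hpq, derivative_eval_endpoints]
      linarith
    set E := 8 * (((derivative p).eval 1 ^ 2 + (derivative p).eval (-1) ^ 2) / 2)
    obtain ⟨c, hEc, hcJ⟩ := exists_between hE
    obtain ⟨t, htc, ht⟩ := (((htend.const_mul K).eventually (lt_mem_nhds hcJ)).and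
      self_mem_nhdsWithin).exists
    have ht : 0 < t := ht
    have hcont : Tendsto (fun z : (Fin (N + 2) → ℝ) × ℝ =>
        K * weightIntegral t ((∑ i, C (z.1 i) * X ^ (i : ℕ)) ^ 2)) (𝓝 v₀ ×ˢ 𝓝[>] 0)
        (𝓝 (K * weightIntegral t (p ^ 2))) := by
      simp only [hp, weightIntegral_sum_sq ht]
      have : Continuous fun v : Fin (N + 2) → ℝ => K * ∑ i, ∑ j, v i * v j *
          weightIntegral t (X ^ (i : ℕ) * X ^ (j : ℕ)) := by fun_prop
      exact (this.tendsto v₀).comp tendsto_fst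
    have hsmall : ∀ᶠ z : (Fin (N + 2) → ℝ) × ℝ in 𝓝 v₀ ×ˢ 𝓝[>] 0, z.2 < t :=
      tendsto_snd.eventually (nhdsWithin_le_nhds (Iio_mem_nhds ht))
    filter_upwards [hpos, hsmall, hcont.eventually (lt_mem_nhds htc),
      (hlim'.const_mul 8).eventually (gt_mem_nhds hEc)] with z hz hzt h1 h2
    exact h2.le.trans (h1.le.trans
      (mul_le_mul_of_nonneg_left (weightIntegral_sq_antitone hz hzt.le _) hK0.le))
  · have hend_pos : 0 < p.eval 1 ^ 2 + p.eval (-1) ^ 2 := by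
      rcases not_and_or.1 hend with h | h <;> positivity
    have hid : Tendsto (fun z : (Fin (N + 2) → ℝ) × ℝ => z.2) (𝓝 v₀ ×ˢ 𝓝[>] 0) (𝓝 0) :=
      tendsto_snd.mono_right nhdsWithin_le_nhds
    have h := (hlim.const_mul K).sub ((hid.mul hlim').const_mul 8)
    rw [zero_mul, mul_zero, sub_zero] at h
    filter_upwards [hpos, h.eventually (lt_mem_nhds (mul_pos hK0 (half_pos hend_pos)))]
      with z hz h1
    refine le_of_mul_le_mul_left ?_ hz
    linarith

open Topology in
theorem eventually_markov {N : ℕ} (hN : 1 ≤ N) {K : ℝ}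
    (hK : (N : ℝ) * (N + 1) * (N + 2) * (N + 3) < K) :
    ∀ᶠ s : ℝ in 𝓝[>] 0, ∀ p : ℝ[X], p.natDegree ≤ N + 1 →
      8 * (s * weightIntegral s (derivative p ^ 2)) ≤ K * weightIntegral s (p ^ 2) := by
  have hcompact : IsCompact (Metric.sphere (0 : Fin (N + 2) → ℝ) 1) := isCompact_sphere 0 1
  have h := hcompact.mem_nhdsSet_prod_of_forall (l := 𝓝[>] (0:ℝ)) fun v hv =>
    eventually_markov_near hN hK (ne_zero_of_mem_unit_sphere ⟨v, hv⟩)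
  have h' : ∀ᶠ z : ℝ × (Fin (N + 2) → ℝ) in
      𝓝[>] (0:ℝ) ×ˢ 𝓝ˢ (Metric.sphere (0 : Fin (N + 2) → ℝ) 1),
      8 * (z.1 * weightIntegral z.1 ((∑ i, C (z.2 i) * derivative (X ^ (i : ℕ))) ^ 2)) ≤
        K * weightIntegral z.1 ((∑ i, C (z.2 i) * X ^ (i : ℕ)) ^ 2) :=
    eventually_swap_iff.1 h
  filter_upwards [h'.curry] with s hs p hp
  set v : Fin (N + 2) → ℝ := fun i => p.coeff i with hv
  have hpv : p = ∑ i, C (v i) * X ^ (i : ℕ) := by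
    rw [Fin.sum_univ_eq_sum_range (fun i => C (p.coeff i) * X ^ i) (N + 2)]
    exact p.as_sum_range_C_mul_X_pow' (by omega)
  rcases eq_or_ne v 0 with h0 | h0
  · have : p = 0 := by rw [hpv, h0]; simp
    simp [this, weightIntegral]
  · have hu : ‖v‖⁻¹ • v ∈ Metric.sphere (0 : Fin (N + 2) → ℝ) 1 := by
      rw [mem_sphere_zero_iff_norm, norm_smul, norm_inv, norm_norm,
        inv_mul_cancel₀ (norm_ne_zero_iff.2 h0)]
    have key := hs.self_of_nhdsSet _ hu
    have e1 : ∑ i, C ((‖v‖⁻¹ • v) i) * X ^ (i : ℕ) = C ‖v‖⁻¹ * p := by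
      conv_rhs => rw [hpv]
      simp [Finset.mul_sum, mul_assoc]
    have e2 : ∑ i, C ((‖v‖⁻¹ • v) i) * derivative (X ^ (i : ℕ)) = C ‖v‖⁻¹ * derivative p := by
      rw [← derivative_C_mul, ← e1, derivative_sum]
      exact Finset.sum_congr rfl fun i _ => (derivative_C_mul _ _).symm
    rw [e1, e2, mul_pow, mul_pow, ← C_pow, weightIntegral_C_mul, weightIntegral_C_mul] at key
    have hc : 0 < ‖v‖⁻¹ ^ 2 := by have := norm_pos_iff.2 h0; positivity
    refine le_of_mul_le_mul_left ?_ hc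
    linarith

theorem gegNorm_eval (lam : ℝ) (p : ℝ[X]) :
    gegNorm lam (fun x => p.eval x) = √(weightIntegral (lam + 1 / 2) (p ^ 2)) := by
  rw [gegNorm, weightIntegral, Real.sqrt_eq_rpow]
  congr 2; ext x
  rw [eval_pow]
  congr 2; ring

theorem weightIntegral_sq_nonneg (s : ℝ) (p : ℝ[X]) : 0 ≤ weightIntegral s (p ^ 2) := by
  refine intervalIntegral.integral_nonneg (by norm_num) fun x hx => ?_
  rw [eval_pow]
  exact mul_nonneg (sq_nonneg _) (Real.rpow_nonneg (one_sub_sq_nonneg_of_mem_Icc hx) _)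

theorem two_mul_sqrt_mul_sqrt {lam : ℝ} (hlam : -(1 / 2) < lam) (y : ℝ) :
    2 * √(2 * lam + 1) * √y = √(8 * ((lam + 1 / 2) * y)) := by
  rw [show 8 * ((lam + 1 / 2) * y) = (2 ^ 2 * (2 * lam + 1)) * y by ring,
    Real.sqrt_mul (by linarith), Real.sqrt_mul (by norm_num), Real.sqrt_sq (by norm_num)]

/-- A uniform quadratic bound on derivatives bounds every ratio in the Markov problem. -/
theorem markov_ratio_le {lam M : ℝ} (hlam : -(1 / 2) < lam) (hM : 0 ≤ M) {p : ℝ[X]}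
    (h : 8 * ((lam + 1 / 2) * weightIntegral (lam + 1 / 2) (derivative p ^ 2)) ≤
      M ^ 2 * weightIntegral (lam + 1 / 2) (p ^ 2)) :
    gegNorm lam (fun x => (derivative p).eval x) / gegNorm lam (fun x => p.eval x) ≤
      M / (2 * √(2 * lam + 1)) := by
  have hpos : 0 < 2 * √(2 * lam + 1) := mul_pos two_pos (Real.sqrt_pos.2 (by linarith))
  rw [gegNorm_eval, gegNorm_eval]
  refine div_le_of_le_mul₀ (Real.sqrt_nonneg _) (by positivity) ?_
  rw [div_mul_eq_mul_div, le_div_iff₀ hpos, mul_comm, two_mul_sqrt_mul_sqrt hlam]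
  refine (Real.sqrt_le_sqrt h).trans_eq ?_
  rw [Real.sqrt_mul (sq_nonneg M), Real.sqrt_sq hM]

theorem markov_asymptotics_lambda_to_neg_half (n : ℕ) (hn : 3 ≤ n) :
    ((n : ℝ) - 1/2) * ((n : ℝ) - 1) ≤
      Filter.liminf (fun lam : ℝ => 2 * Real.sqrt (2*lam + 1) * markovConst lam n)
        (nhdsWithin (-(1/2 : ℝ)) (Set.Ioi (-(1/2 : ℝ)))) ∧
    Filter.limsup (fun lam : ℝ => 2 * Real.sqrt (2*lam + 1) * markovConst lam n)
        (nhdsWithin (-(1/2 : ℝ)) (Set.Ioi (-(1/2 : ℝ)))) ≤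
      ((n : ℝ) + 3/2)^2 := by
  obtain ⟨N, rfl⟩ : ∃ N, n = N + 1 := ⟨n - 1, by omega⟩
  have hN : 1 ≤ N := by omega
  have hN' : (1 : ℝ) ≤ N := by exact_mod_cast hN
  set l := nhdsWithin (-(1 / 2 : ℝ)) (Set.Ioi (-(1 / 2 : ℝ)))
  have hshift : Tendsto (fun lam : ℝ => lam + 1 / 2) l (nhdsWithin 0 (Set.Ioi 0)) := by
    refine tendsto_nhdsWithin_iff.2 ⟨?_, ?_⟩
    · have h : Tendsto (fun lam : ℝ => lam + 1 / 2) (nhds (-(1 / 2))) (nhds (-(1 / 2) + 1 / 2)) :=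
        (continuous_id.add continuous_const).tendsto _
      rw [neg_add_cancel] at h
      exact h.mono_left nhdsWithin_le_nhds
    · filter_upwards [self_mem_nhdsWithin] with lam hlam
      have : -(1 / 2) < lam := hlam
      exact Set.mem_Ioi.2 (by linarith)
  have hgt : ∀ᶠ lam in l, -(1 / 2) < lam := self_mem_nhdsWithin
  have hmarkov := hshift.eventually (eventually_markov hN
    (K := ((((N + 1 : ℕ) : ℝ) + 3 / 2) ^ 2) ^ 2) (by
      push_cast
      nlinarith [pow_pos (zero_lt_one.trans_le hN') 2, pow_pos (zero_lt_one.trans_le hN') 3]))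
  have hratio : ∀ᶠ lam in l, ∀ r ∈ { r : ℝ | ∃ p : Polynomial ℝ, p ≠ 0 ∧ p.natDegree ≤ N + 1 ∧
      r = gegNorm lam (fun x => (Polynomial.derivative p).eval x) /
        gegNorm lam (fun x => p.eval x) },
      r ≤ (((N + 1 : ℕ) : ℝ) + 3 / 2) ^ 2 / (2 * √(2 * lam + 1)) := by
    filter_upwards [hgt, hmarkov] with lam hlam h
    rintro r ⟨p, -, hp, rfl⟩
    exact markov_ratio_le hlam (by positivity) (h p hp)
  have hupper : ∀ᶠ lam in l, 2 * √(2 * lam + 1) * markovConst lam (N + 1) ≤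
      (((N + 1 : ℕ) : ℝ) + 3 / 2) ^ 2 := by
    filter_upwards [hgt, hratio] with lam hlam h
    have hpos : 0 < 2 * √(2 * lam + 1) := mul_pos two_pos (Real.sqrt_pos.2 (by linarith))
    rw [← le_div_iff₀' hpos]
    exact csSup_le ⟨_, 1, one_ne_zero, by simp, rfl⟩ h
  have hlower : ∀ᶠ lam in l, (((N + 1 : ℕ) : ℝ) - 1 / 2) * (((N + 1 : ℕ) : ℝ) - 1) ≤
      2 * √(2 * lam + 1) * markovConst lam (N + 1) := by
    obtain ⟨q, hdeg, hJ, heq⟩ := exists_endpoint_eq hN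
    set B : ℝ := (((N + 1 : ℕ) : ℝ) - 1 / 2) * (((N + 1 : ℕ) : ℝ) - 1) with hB
    have hB0 : 0 ≤ B := by rw [hB]; push_cast; nlinarith
    have hBT : B ^ 2 < (N : ℝ) * (N + 1) * (N + 2) * (N + 3) := by
      rw [hB]; push_cast
      nlinarith [pow_pos (zero_lt_one.trans_le hN') 2, pow_pos (zero_lt_one.trans_le hN') 3]
    have hp := hshift.eventually ((tendsto_weightIntegral_of_vanishing q).eventually
      (lt_mem_nhds hJ))
    have hdiff := ((tendsto_mul_weightIntegral
      (derivative ((1 - X ^ 2) * q) ^ 2)).const_mul 8).sub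
      ((tendsto_weightIntegral_of_vanishing q).const_mul (B ^ 2))
    rw [eval_pow, eval_pow, derivative_eval_endpoints] at hdiff
    have hd := hshift.eventually (hdiff.eventually (lt_mem_nhds (a := 0) (by
      have := mul_lt_mul_of_pos_right hBT hJ
      linarith)))
    filter_upwards [hgt, hratio, hp, hd] with lam hlam hbdd hpos hd
    have hne : (1 - X ^ 2) * q ≠ 0 := by
      intro h0
      rw [h0] at hpos
      simp [weightIntegral] at hpos
    have hle := le_csSup ⟨_, hbdd⟩ ⟨(1 - X ^ 2) * q, hne, by
      have : (1 - X ^ 2 : ℝ[X]).natDegree ≤ 2 := by compute_degree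
      exact natDegree_mul_le.trans (by omega), rfl⟩
    refine le_trans ?_ (mul_le_mul_of_nonneg_left hle (by positivity))
    rw [gegNorm_eval, gegNorm_eval, ← mul_div_assoc, le_div_iff₀ (Real.sqrt_pos.2 hpos),
      two_mul_sqrt_mul_sqrt hlam]
    refine Real.le_sqrt_of_sq_le ?_
    rw [mul_pow, Real.sq_sqrt (weightIntegral_sq_nonneg _ _)]
    linarith
  have hne : l.NeBot := inferInstance
  exact ⟨le_liminf_of_le (isCoboundedUnder_ge_of_eventually_le l hupper) hlower,
    limsup_le_of_le (isCoboundedUnder_le_of_eventually_le l hlower) hupper⟩
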